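/- Let λ1>0 and λ3>0, and let f be the joint mass function of the bivariate Pseudo-Poisson distribution with λ2 = λ3. Then the correlation coefficient of the two coordinates, defined as Cov(X1,X2)/√(Var(X1)·Var(X2)) with moments computed as sums against f, equals √(λ1·λ3/(1 + λ1 + λ1·λ3)). -/

import Mathlib

/-!
Conditionally on `X1 = x1`, the second coordinate is Poisson with mean `l3 * (1 + x1)`, so each
inner sum is the zeroth, first or second moment of a Poisson law. What remains is the sum over `x1`
of a polynomial of degree at most two in `x1` against the Poisson law of mean `l1`. All of these
come from `hasSum_quadratic_poissonWeight`, which gives `E[a + b N + c N²] = a + b m + c (m² + m)`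
for `N` Poisson of mean `m`, itself a consequence of the Poisson recursion
`E[N g(N)] = m E[g(N + 1)]`. The outcome is `Cov = l1 l3`, `Var X1 = l1` and
`Var X2 = l3 (1 + l1 + l1 l3)`.
-/

/-- The joint mass function of the bivariate Pseudo-Poisson distribution
with parameters `λ1, λ2, λ3` (with linear regression). -/
noncomputable def pseudoPoissonPMF (l1 l2 l3 : ℝ) (x1 x2 : ℕ) : ℝ :=
  (Real.exp (-l1) * l1 ^ x1 / (Nat.factorial x1)) *
    (Real.exp (-(l2 + l3 * x1)) * (l2 + l3 * x1) ^ x2 / (Nat.factorial x2))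

/-- The mass at `n` of the Poisson law of mean `m`. For negative `m` this is only a formal (signed)
weight, but the moment identities below hold for it as well. -/
noncomputable def poissonWeight (m : ℝ) (n : ℕ) : ℝ :=
  Real.exp (-m) * m ^ n / (Nat.factorial n)

theorem hasSum_of_eq {f g : ℕ → ℝ} {a b : ℝ} (h : HasSum f a) (hfg : ∀ n, g n = f n)
    (hab : b = a) : HasSum g b := by
  rwa [funext hfg, hab]

theorem hasSum_poissonWeight (m : ℝ) : HasSum (poissonWeight m) 1 := by
  have h : HasSum (fun n : ℕ => m ^ n / (Nat.factorial n : ℝ)) (Real.exp m) := by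
    rw [Real.exp_eq_exp_ℝ]
    exact NormedSpace.expSeries_div_hasSum_exp m
  refine hasSum_of_eq (h.mul_left (Real.exp (-m))) (fun n => ?_) ?_
  · simp only [poissonWeight]
    ring
  · rw [← Real.exp_add]
    simp

/-- The Poisson recursion `E[N g(N)] = m E[g(N + 1)]`. -/
theorem hasSum_nat_mul_poissonWeight {m S : ℝ} {g : ℕ → ℝ}
    (h : HasSum (fun n : ℕ => g (n + 1) * poissonWeight m n) S) :
    HasSum (fun n : ℕ => (n : ℝ) * g n * poissonWeight m n) (m * S) := by
  rw [← hasSum_nat_add_iff' 1]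
  refine hasSum_of_eq (h.mul_left m) (fun n => ?_) ?_
  · have hn : ((n : ℝ) + 1) ≠ 0 := by positivity
    have hf : (Nat.factorial n : ℝ) ≠ 0 := by positivity
    simp only [poissonWeight, Nat.factorial_succ]
    push_cast
    field_simp
    ring
  · simp

theorem hasSum_quadratic_poissonWeight (m a b c : ℝ) :
    HasSum (fun n : ℕ => (a + b * n + c * (n : ℝ) ^ 2) * poissonWeight m n)
      (a + b * m + c * (m ^ 2 + m)) := by
  have h0 := hasSum_poissonWeight m
  have h1 : HasSum (fun n : ℕ => (n : ℝ) * 1 * poissonWeight m n) (m * 1) :=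
    hasSum_nat_mul_poissonWeight (g := fun _ => 1) (by simpa using h0)
  have h2 : HasSum (fun n : ℕ => (n : ℝ) * n * poissonWeight m n) (m * (m + 1)) := by
    refine hasSum_nat_mul_poissonWeight (g := fun n => (n : ℝ)) ?_
    refine hasSum_of_eq (h1.add h0) (fun n => ?_) ?_
    · push_cast
      ring
    · ring
  refine hasSum_of_eq (((h0.mul_left a).add (h1.mul_left b)).add (h2.mul_left c)) (fun n => ?_) ?_
  · ring
  · ring

/-- A mixed moment is computed by conditioning on the first coordinate: the conditional moment of a
quadratic in `x2` is supplied as a quadratic `a + b x1 + c x1²` in `x1`. -/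
theorem tsum_pseudoPoissonPMF (l1 l3 : ℝ) (F : ℕ → ℕ → ℝ) (a b c : ℝ) (u v w : ℕ → ℝ)
    (hF : ∀ x1 x2 : ℕ, F x1 x2 = u x1 + v x1 * x2 + w x1 * (x2 : ℝ) ^ 2)
    (hcond : ∀ x1 : ℕ, u x1 + v x1 * (l3 + l3 * x1)
      + w x1 * ((l3 + l3 * x1) ^ 2 + (l3 + l3 * x1)) = a + b * x1 + c * (x1 : ℝ) ^ 2) :
    ∑' x1 : ℕ, ∑' x2 : ℕ, F x1 x2 * pseudoPoissonPMF l1 l3 l3 x1 x2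
      = a + b * l1 + c * (l1 ^ 2 + l1) := by
  rw [← (hasSum_quadratic_poissonWeight l1 a b c).tsum_eq]
  refine tsum_congr fun x1 => ?_
  rw [← hcond x1]
  refine HasSum.tsum_eq ?_
  refine hasSum_of_eq ((hasSum_quadratic_poissonWeight (l3 + l3 * x1) (u x1) (v x1) (w x1)).mul_left
    (poissonWeight l1 x1)) (fun x2 => ?_) ?_
  · rw [hF]
    simp only [pseudoPoissonPMF, poissonWeight]
    ring
  · ring

/-- When `λ2 = λ3`, the correlation of the two coordinates of the bivariate
Pseudo-Poisson distribution is `ρ = √(λ1·λ3/(1 + λ1 + λ1·λ3))`. -/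
theorem pseudoPoisson_correlation_subModelI (l1 l3 : ℝ) (h1 : 0 < l1) (h3 : 0 < l3)
    (EX1 EX2 EX1sq EX2sq EX1X2 : ℝ)
    (hEX1 : EX1 = ∑' x1 : ℕ, ∑' x2 : ℕ, (x1 : ℝ) * pseudoPoissonPMF l1 l3 l3 x1 x2)
    (hEX2 : EX2 = ∑' x1 : ℕ, ∑' x2 : ℕ, (x2 : ℝ) * pseudoPoissonPMF l1 l3 l3 x1 x2)
    (hEX1sq : EX1sq = ∑' x1 : ℕ, ∑' x2 : ℕ, (x1 : ℝ) ^ 2 * pseudoPoissonPMF l1 l3 l3 x1 x2)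
    (hEX2sq : EX2sq = ∑' x1 : ℕ, ∑' x2 : ℕ, (x2 : ℝ) ^ 2 * pseudoPoissonPMF l1 l3 l3 x1 x2)
    (hEX1X2 : EX1X2 =
      ∑' x1 : ℕ, ∑' x2 : ℕ, (x1 : ℝ) * (x2 : ℝ) * pseudoPoissonPMF l1 l3 l3 x1 x2) :
    (EX1X2 - EX1 * EX2) / Real.sqrt ((EX1sq - EX1 ^ 2) * (EX2sq - EX2 ^ 2)) =
      Real.sqrt (l1 * l3 / (1 + l1 + l1 * l3)) := by
  have e1 : EX1 = l1 := by
    rw [hEX1, tsum_pseudoPoissonPMF l1 l3 (fun x1 _ => (x1 : ℝ)) 0 1 0 (fun x1 => x1)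
      (fun _ => 0) (fun _ => 0) (by intros; ring) (by intros; ring)]
    ring
  have e2 : EX2 = l3 * (1 + l1) := by
    rw [hEX2, tsum_pseudoPoissonPMF l1 l3 (fun _ x2 => (x2 : ℝ)) l3 l3 0 (fun _ => 0)
      (fun _ => 1) (fun _ => 0) (by intros; ring) (by intros; ring)]
    ring
  have e3 : EX1sq = l1 ^ 2 + l1 := by
    rw [hEX1sq, tsum_pseudoPoissonPMF l1 l3 (fun x1 _ => (x1 : ℝ) ^ 2) 0 0 1
      (fun x1 => (x1 : ℝ) ^ 2) (fun _ => 0) (fun _ => 0) (by intros; ring) (by intros; ring)]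
    ring
  have e4 : EX2sq = l3 ^ 2 * (1 + 3 * l1 + l1 ^ 2) + l3 * (1 + l1) := by
    rw [hEX2sq, tsum_pseudoPoissonPMF l1 l3 (fun _ x2 => (x2 : ℝ) ^ 2) (l3 ^ 2 + l3)
      (2 * l3 ^ 2 + l3) (l3 ^ 2) (fun _ => 0) (fun _ => 0) (fun _ => 1)
      (by intros; ring) (by intros; ring)]
    ring
  have e5 : EX1X2 = l3 * (2 * l1 + l1 ^ 2) := by
    rw [hEX1X2, tsum_pseudoPoissonPMF l1 l3 (fun x1 x2 => (x1 : ℝ) * (x2 : ℝ)) 0 l3 l3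
      (fun _ => 0) (fun x1 => x1) (fun _ => 0) (by intros; ring) (by intros; ring)]
    ring
  have hcov : EX1X2 - EX1 * EX2 = l1 * l3 := by
    rw [e1, e2, e5]
    ring
  have hvar : (EX1sq - EX1 ^ 2) * (EX2sq - EX2 ^ 2) = l1 * l3 * (1 + l1 + l1 * l3) := by
    rw [e1, e2, e3, e4]
    ring
  have hp : 0 < l1 * l3 := mul_pos h1 h3
  rw [hcov, hvar, Real.sqrt_mul hp.le, Real.sqrt_div hp.le, ← div_div, Real.div_sqrt]
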